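/- arXiv:2209.07580 — 5 statements merged into one kernel-verified Lean document; each statement's English description precedes it below -/
import Mathlib

section
/- Let Δ ≥ 1 and t ≥ 1 be integers, let B_1, …, B_Δ ≥ 1 be integers, and let p_1, …, p_Δ ∈ [0,1] satisfy ∑_{k=1}^Δ p_k ≤ 1. Let μ be any probability distribution on {0,1}^Δ whose coordinate means satisfy E_μ[U_k] ≤ p_k for every k ∈ {1,…,Δ}, and let U^{(1)}, …, U^{(t)} be i.i.d. with law μ. Let ν be the probability distribution on {0,1}^Δ that assigns probability p_k to the k-th standard basis vector e_k for each k and probability 1 − ∑_{k=1}^Δ p_k to the zero vector, and let V^{(1)}, …, V^{(t)} be i.i.d. with law ν. Then Pr[∃ k ∈ {1,…,Δ} : ∑_{s=1}^t U_k^{(s)} ≥ B_k] ≤ Pr[∃ k ∈ {1,…,Δ} : ∑_{s=1}^t V_k^{(s)} ≥ B_k]. -/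
open MeasureTheory Finset

/-! Replace the samples of law `μ` by samples of law `ν` one at a time. When all other samples are
fixed, coordinate `k` reaches its threshold in one of three ways: regardless of the remaining
sample `x`, precisely when `x k = 1`, or never. Unless some coordinate succeeds regardless of `x`,
the event is thus `∃ k ∈ S, x k = 1` for some set `S` of coordinates. By the union bound its
probability under `μ` is at most `∑ k ∈ S, p k`; under `ν` it is at least this sum, because the
outcomes `x = e_k` for `k ∈ S` are disjoint. -/

section Pi

variable {δ : Type*} [DecidableEq δ] {X : δ → Type*} [∀ i, MeasurableSpace (X i)]

theorem lintegral_update_lintegral_update_comm {f : (∀ i, X i) → ENNReal} (hf : Measurable f)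
    {i j : δ} (hij : i ≠ j) (μ : Measure (X i)) (ν : Measure (X j)) [SFinite μ] [SFinite ν]
    (x : ∀ i, X i) :
    ∫⁻ y, ∫⁻ z, f (Function.update (Function.update x i y) j z) ∂ν ∂μ =
      ∫⁻ z, ∫⁻ y, f (Function.update (Function.update x j z) i y) ∂μ ∂ν := by
  have hmeas : Measurable fun yz : X i × X j ↦
      f (Function.update (Function.update x i yz.1) j yz.2) :=
    hf.comp (measurable_update'.comp
      (((measurable_update x).comp measurable_fst).prodMk measurable_snd))
  rw [lintegral_lintegral_swap hmeas.aemeasurable]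
  simp_rw [Function.update_comm hij]

variable {μ ν : ∀ i, Measure (X i)} [∀ i, SigmaFinite (μ i)] [∀ i, SigmaFinite (ν i)]

theorem lmarginal_le_lmarginal_of_update_le {f : (∀ i, X i) → ENNReal} (hf : Measurable f)
    {s : Finset δ}
    (h : ∀ i ∈ s, ∀ x, ∫⁻ y, f (Function.update x i y) ∂μ i ≤
      ∫⁻ y, f (Function.update x i y) ∂ν i) :
    lmarginal μ s f ≤ lmarginal ν s f := by
  induction s using Finset.induction generalizing f with
  | empty => simp only [lmarginal_empty, le_refl]
  | insert i s hi ih =>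
    have hfν : Measurable fun x ↦ ∫⁻ y, f (Function.update x i y) ∂ν i :=
      (hf.comp measurable_update').lintegral_prod_right'
    rw [lmarginal_insert' f hf hi, lmarginal_insert' f hf hi]
    refine (lmarginal_mono (h i (mem_insert_self i s))).trans (ih hfν fun j hj x ↦ ?_)
    have hji : j ≠ i := ne_of_mem_of_not_mem hj hi
    rw [lintegral_update_lintegral_update_comm hf hji,
      lintegral_update_lintegral_update_comm hf hji]
    exact lintegral_mono fun z ↦ h j (mem_insert_of_mem hj) _

theorem lintegral_pi_le_lintegral_pi_of_update_le [Fintype δ] {f : (∀ i, X i) → ENNReal}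
    (hf : Measurable f)
    (h : ∀ i x, ∫⁻ y, f (Function.update x i y) ∂μ i ≤ ∫⁻ y, f (Function.update x i y) ∂ν i) :
    ∫⁻ x, f x ∂Measure.pi μ ≤ ∫⁻ x, f x ∂Measure.pi ν := by
  rcases isEmpty_or_nonempty (∀ i, X i) with _ | ⟨⟨x⟩⟩
  · simp only [lintegral_of_isEmpty, le_refl]
  · rw [lintegral_eq_lmarginal_univ x, lintegral_eq_lmarginal_univ x]
    exact lmarginal_le_lmarginal_of_update_le hf (fun i _ ↦ h i) x

theorem measure_pi_le_measure_pi_of_update_le [Fintype δ] {A : Set (∀ i, X i)}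
    (hA : MeasurableSet A)
    (h : ∀ i x, μ i (Function.update x i ⁻¹' A) ≤ ν i (Function.update x i ⁻¹' A)) :
    Measure.pi μ A ≤ Measure.pi ν A := by
  rw [← lintegral_indicator_one hA, ← lintegral_indicator_one hA]
  refine lintegral_pi_le_lintegral_pi_of_update_le (measurable_one.indicator hA) fun i x ↦ ?_
  have hAi : MeasurableSet (Function.update x i ⁻¹' A) := measurable_update x hA
  calc ∫⁻ y, A.indicator 1 (Function.update x i y) ∂μ i
      = μ i (Function.update x i ⁻¹' A) := lintegral_indicator_one hAi
    _ ≤ ν i (Function.update x i ⁻¹' A) := h i x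
    _ = ∫⁻ y, A.indicator 1 (Function.update x i y) ∂ν i := (lintegral_indicator_one hAi).symm

end Pi

theorem measure_biUnion_le_measure_biUnion_of_pairwiseDisjoint {ι α β : Type*}
    [MeasurableSpace α] [MeasurableSpace β] {μ : Measure α} {ν : Measure β} {S : Set ι}
    (hS : S.Countable) {E : ι → Set α} {F : ι → Set β} (hF : ∀ k ∈ S, MeasurableSet (F k))
    (hdisj : S.PairwiseDisjoint F) (h : ∀ k ∈ S, μ (E k) ≤ ν (F k)) :
    μ (⋃ k ∈ S, E k) ≤ ν (⋃ k ∈ S, F k) :=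
  calc μ (⋃ k ∈ S, E k)
      ≤ ∑' k : S, μ (E k) := measure_biUnion_le μ hS E
    _ ≤ ∑' k : S, ν (F k) := ENNReal.tsum_le_tsum fun k ↦ h k k.2
    _ = ν (⋃ k ∈ S, F k) := (measure_biUnion hS hdisj hF).symm

theorem measure_le_ofReal_of_integral_ite_le {α : Type*} [MeasurableSpace α] {μ : Measure α}
    [IsFiniteMeasure μ] {P : α → Prop} [DecidablePred P] (hP : MeasurableSet {x | P x}) {a : ℝ}
    (h : ∫ x, (if P x then (1 : ℝ) else 0) ∂μ ≤ a) :
    μ {x | P x} ≤ ENNReal.ofReal a := by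
  have hint : ∫ x, (if P x then (1 : ℝ) else 0) ∂μ = μ.real {x | P x} := by
    rw [← integral_indicator_one hP]
    simp only [Set.indicator_apply, Set.mem_ofPred_eq, Pi.one_apply]
  rw [← ofReal_measureReal]
  exact ENNReal.ofReal_le_ofReal (hint ▸ h)

theorem isUpperSet_le_sum_ite {σ : Type*} [Fintype σ] (n : ℕ) :
    IsUpperSet {b : σ → Bool | n ≤ ∑ s, if b s then 1 else 0} := by
  intro b b' hbb' (hb : n ≤ _)
  refine hb.trans (sum_le_sum fun s _ ↦ ?_)
  have himp : b s → b' s := Bool.le_iff_imp.1 (hbb' s)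
  grind

section BooleanVectors

variable {ι : Type*}

/-- The standard basis vector `e_k` of `{0,1}^ι`, with `{0,1}` encoded as `Bool`. -/
def boolBasisVector [DecidableEq ι] (k : ι) : ι → Bool := fun j ↦ decide (j = k)

theorem boolBasisVector_injective [DecidableEq ι] :
    Function.Injective (boolBasisVector : ι → ι → Bool) := fun i j hij ↦ by
  simpa [boolBasisVector] using congrFun hij i

variable [Countable ι] [DecidableEq ι]

theorem measure_exists_mem_le_of_le_boolBasisVector {μ ν : Measure (ι → Bool)}
    [IsProbabilityMeasure μ] [IsProbabilityMeasure ν]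
    (h : ∀ k, μ {x | x k} ≤ ν {boolBasisVector k})
    {Q : ι → Set Bool} (hQ : ∀ k, IsUpperSet (Q k)) :
    μ {x | ∃ k, x k ∈ Q k} ≤ ν {x | ∃ k, x k ∈ Q k} := by
  by_cases hfalse : ∃ k, false ∈ Q k
  · obtain ⟨k, hk⟩ := hfalse
    have huniv : {x : ι → Bool | ∃ k, x k ∈ Q k} = Set.univ :=
      Set.eq_univ_of_forall fun x ↦ ⟨k, hQ k (Bool.false_le _) hk⟩
    rw [huniv, measure_univ, measure_univ]
  · push Not at hfalse
    calc μ {x | ∃ k, x k ∈ Q k}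
        ≤ μ (⋃ k ∈ {k | true ∈ Q k}, {x | x k}) := measure_mono fun x ⟨k, hk⟩ ↦ by
          have hxk : x k = true := by
            by_contra hxk
            exact hfalse k (Bool.eq_false_of_not_eq_true hxk ▸ hk)
          exact Set.mem_biUnion (hxk ▸ hk) hxk
      _ ≤ ν (⋃ k ∈ {k | true ∈ Q k}, {boolBasisVector k}) :=
          measure_biUnion_le_measure_biUnion_of_pairwiseDisjoint (Set.to_countable _)
            (fun k _ ↦ measurableSet_singleton _)
            (fun i _ j _ hij ↦ Set.disjoint_singleton.2 (boolBasisVector_injective.ne hij))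
            (fun k _ ↦ h k)
      _ ≤ ν {x | ∃ k, x k ∈ Q k} := measure_mono <| Set.iUnion₂_subset fun k (hk : true ∈ Q k) ↦ by
          rintro _ rfl
          exact ⟨k, by simpa only [boolBasisVector, decide_true] using hk⟩

theorem worst_case_correlation_general {σ : Type*} [Fintype σ] {μ ν : σ → Measure (ι → Bool)}
    [∀ s, IsProbabilityMeasure (μ s)] [∀ s, IsProbabilityMeasure (ν s)]
    (h : ∀ s k, μ s {x | x k} ≤ ν s {boolBasisVector k})
    {A : ι → Set (σ → Bool)} (hA : ∀ k, IsUpperSet (A k)) :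
    Measure.pi μ {ω | ∃ k, (fun s ↦ ω s k) ∈ A k} ≤
      Measure.pi ν {ω | ∃ k, (fun s ↦ ω s k) ∈ A k} := by
  classical
  have hmeas : MeasurableSet {ω : σ → ι → Bool | ∃ k, (fun s ↦ ω s k) ∈ A k} := by
    rw [Set.ofPred_exists]
    exact .iUnion fun k ↦ (by fun_prop : Measurable fun (ω : σ → ι → Bool) s ↦ ω s k)
      (Set.toFinite (A k)).measurableSet
  refine measure_pi_le_measure_pi_of_update_le hmeas fun s ω ↦ ?_
  have hsection : Function.update ω s ⁻¹' {ω | ∃ k, (fun s ↦ ω s k) ∈ A k} =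
      {x | ∃ k, x k ∈ Function.update (fun r ↦ ω r k) s ⁻¹' A k} := by
    ext x
    refine exists_congr fun k ↦ ?_
    rw [Set.mem_preimage, ← funext (Function.apply_update (fun _ y ↦ y k) ω s x)]
  rw [hsection]
  exact measure_exists_mem_le_of_le_boolBasisVector (h s) fun k ↦
    (hA k).preimage Function.update_mono

end BooleanVectors

/-- Worst-case correlation structure: among all probability distributions `μ` on `{0,1}^Δ`
whose coordinate means are at most `p_k`, the probability that some coordinate of the
`t`-fold i.i.d. sum reaches its threshold `B_k` is maximized by the distribution `ν`
supported on the standard basis vectors (with mass `p_k` on `e_k`) and the zero vector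
(with mass `1 − ∑_k p_k`). -/
theorem worst_case_correlation (Δ t : ℕ) (hΔ : 1 ≤ Δ) (ht : 1 ≤ t)
    (B : Fin Δ → ℕ) (hB : ∀ k, 1 ≤ B k)
    (p : Fin Δ → ℝ) (hp : ∀ k, p k ∈ Set.Icc (0:ℝ) 1) (hpsum : ∑ k, p k ≤ 1)
    (μ ν : Measure (Fin Δ → Bool))
    [IsProbabilityMeasure μ] [IsProbabilityMeasure ν]
    (hμmean : ∀ k : Fin Δ, (∫ x, (if x k then (1:ℝ) else 0) ∂μ) ≤ p k)
    (hνbasis : ∀ k : Fin Δ,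
      ν {(fun j => decide (j = k) : Fin Δ → Bool)} = ENNReal.ofReal (p k))
    (hνzero : ν {(fun _ => false : Fin Δ → Bool)} = ENNReal.ofReal (1 - ∑ k, p k)) :
    (Measure.pi fun _ : Fin t => μ)
        {ω : Fin t → (Fin Δ → Bool) | ∃ k : Fin Δ, B k ≤ ∑ s : Fin t, if ω s k then 1 else 0}
      ≤ (Measure.pi fun _ : Fin t => ν)
        {ω : Fin t → (Fin Δ → Bool) | ∃ k : Fin Δ, B k ≤ ∑ s : Fin t, if ω s k then 1 else 0} :=
  worst_case_correlation_general
    (fun _ k ↦ hνbasis k ▸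
      measure_le_ofReal_of_integral_ite_le (Set.toFinite _).measurableSet (hμmean k))
    (fun k ↦ isUpperSet_le_sum_ite (B k))
end

section
/- For every fixed real α ∈ (0,1], the function η ↦ (1 − e^{−2αη} − 2α e^{−αη}) / (αη)² is increasing on the interval (0,1]. -/
open Real Set

/-!
In the variable `x = α * η`, the derivative has the sign of
`x + 1 + α * (x + 2) * exp x - exp (2 * x)`, which increases with `α`. So the worst case of the
constraint `x ≤ α` is `α = x`, where positivity says `(exp x - 1 - x) * (exp x + 1) <
x * (x + 1) * exp x`; this follows from `exp x - 1 - x ≤ x ^ 2` and `x < exp x`.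
-/

lemma exp_two_mul_lt {x : ℝ} (hx₀ : 0 < x) (hx₁ : x ≤ 1) :
    exp (2 * x) < x + 1 + x * (x + 2) * exp x := by
  have remainder_le : exp x - 1 - x ≤ x ^ 2 :=
    (abs_le.mp (abs_exp_sub_one_sub_id_le (abs_le.mpr ⟨by linarith, hx₁⟩))).2
  have lt_exp : x < exp x := (lt_add_one x).trans_le (add_one_le_exp x)
  have key : (exp x - 1 - x) * (exp x + 1) < x * (x + 1) * exp x :=
    calc (exp x - 1 - x) * (exp x + 1)
      _ ≤ x ^ 2 * (exp x + 1) := by gcongr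
      _ = x ^ 2 * exp x + x * x := by ring
      _ < x ^ 2 * exp x + x * exp x := by gcongr
      _ = x * (x + 1) * exp x := by ring
  rw [two_mul, exp_add]
  linarith

lemma hasDerivAt_one_sub_exp_div_sq (a : ℝ) {x : ℝ} (hx : x ≠ 0) :
    HasDerivAt (fun x : ℝ => (1 - exp (-2 * x) - 2 * a * exp (-x)) / x ^ 2)
      (2 * exp (-2 * x) * (x + 1 + a * (x + 2) * exp x - exp (2 * x)) / x ^ 3) x := by
  have hasDerivAt_num : HasDerivAt (fun x : ℝ => 1 - exp (-2 * x) - 2 * a * exp (-x))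
      (-(exp (-2 * x) * -2) - 2 * a * (exp (-x) * -1)) x :=
    ((hasDerivAt_const_mul (-2)).exp.const_sub 1).sub ((hasDerivAt_neg x).exp.const_mul (2 * a))
  refine (hasDerivAt_num.div (hasDerivAt_pow 2 x) (pow_ne_zero 2 hx)).congr_deriv ?_
  have exp_neg_two_mul_mul_exp : exp (-(2 * x)) * exp x = exp (-x) := by
    rw [← exp_add]; ring_nf
  have exp_neg_two_mul_mul_exp_two_mul : exp (-(2 * x)) * exp (2 * x) = 1 := by
    rw [← exp_add, neg_add_cancel, exp_zero]
  push_cast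
  field_simp
  linear_combination exp_neg_two_mul_mul_exp_two_mul - a * (x + 2) * exp_neg_two_mul_mul_exp

lemma strictMonoOn_one_sub_exp_div_sq (a : ℝ) :
    StrictMonoOn (fun x : ℝ => (1 - exp (-2 * x) - 2 * a * exp (-x)) / x ^ 2)
      (Ioc 0 (min a 1)) := by
  refine strictMonoOn_of_hasDerivWithinAt_pos (convex_Ioc _ _)
    (fun x hx => (hasDerivAt_one_sub_exp_div_sq a hx.1.ne').continuousAt.continuousWithinAt)
    (fun x hx => (hasDerivAt_one_sub_exp_div_sq a
      (interior_subset hx).1.ne').hasDerivWithinAt) fun x hx => ?_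
  obtain ⟨hx₀, hx_le⟩ := interior_subset hx
  obtain ⟨hxa, hx₁⟩ := le_min_iff.mp hx_le
  have factor_pos : 0 < x + 1 + a * (x + 2) * exp x - exp (2 * x) :=
    sub_pos.mpr <| calc
      exp (2 * x) < x + 1 + x * (x + 2) * exp x := exp_two_mul_lt hx₀ hx₁
      _ ≤ x + 1 + a * (x + 2) * exp x := by gcongr
  positivity

theorem increasing_on_Ioc_general (α : ℝ) (hα : 0 < α) :
    StrictMonoOn
      (fun η : ℝ => (1 - Real.exp (-2 * α * η) - 2 * α * Real.exp (-α * η)) / (α * η) ^ 2)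
      (Set.Ioc (0 : ℝ) (min 1 α⁻¹)) := by
  have mapsTo : MapsTo (α * ·) (Ioc 0 (min 1 α⁻¹)) (Ioc 0 (min α 1)) := by
    rintro η ⟨hη₀, hη⟩
    obtain ⟨hη₁, hηα⟩ := le_min_iff.mp hη
    exact ⟨mul_pos hα hη₀,
      le_min (mul_le_of_le_one_right hα.le hη₁) ((le_inv_mul_iff₀ hα).mp (by simpa using hηα))⟩
  simpa only [Function.comp_def, ← mul_assoc, ← neg_mul] using
    (strictMonoOn_one_sub_exp_div_sq α).comp
      ((strictMono_mul_left_of_pos hα).strictMonoOn _) mapsTo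

/-- For every fixed `α ∈ (0,1]`, the function
`η ↦ (1 − e^{−2αη} − 2α e^{−αη}) / (αη)²` is increasing on `(0,1]`. -/
theorem increasing_on_Ioc (α : ℝ) (hα : α ∈ Set.Ioc (0:ℝ) 1) :
    StrictMonoOn
      (fun η : ℝ => (1 - Real.exp (-2 * α * η) - 2 * α * Real.exp (-α * η)) / (α * η) ^ 2)
      (Set.Ioc (0:ℝ) 1) := by
  simpa only [min_eq_left ((one_le_inv₀ hα.1).mpr hα.2)] using increasing_on_Ioc_general α hα.1
end

section
/- Define g(x) := (1 − e^{−2x} − 2x e^{−x}) / x² for x > 0. Then there exists a unique η ∈ (0,∞) such that g′(η) = 0; the function g is strictly increasing on (0, η] and strictly decreasing on [η, ∞); moreover η ∈ (1.1, 1.2), and η is the unique maximizer of g on (0,∞). -/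
open Real Set

/-- `g(x) = (1 − e^{−2x} − 2x e^{−x}) / x²`. -/
noncomputable def gVar (x : ℝ) : ℝ :=
  (1 - Real.exp (-2 * x) - 2 * x * Real.exp (-x)) / x ^ 2

/-!
If `f a ≥ 0`, `f'` changes sign once on `(a, ∞)`, from `+` to `-`, and `f` is negative somewhere on
`(a, ∞)`, then `f` also changes sign once there, from `+` to `-`: it rises from `f a` and then
decreases through `0`. Differentiating `g`, and dropping positive factors between differentiations,
gives functions that vanish at `0`, until the polynomial `1 - 3x - x²` appears, which has exactly
one positive root. The sign pattern travels back along this chain to `g'`. The zero of `g'` lies in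
`(1.1, 1.2)` because its numerator is positive at `1.1` and negative at `1.2`.
-/

/-- On `(a, ∞)` the function `f` is positive before `c`, zero at `c` and negative after `c`, where
`a < c`. This is encoded as equality of the signs of `f x` and `c - x`; nothing is said about `f`
on `(-∞, a]`. -/
structure IsDownCrossing (f : ℝ → ℝ) (a c : ℝ) : Prop where
  lt : a < c
  sign_eq : ∀ x, a < x → SignType.sign (f x) = SignType.sign (c - x)

namespace IsDownCrossing

variable {f g r : ℝ → ℝ} {a b c x : ℝ} {s : Set ℝ}

theorem pos_iff (h : IsDownCrossing f a c) (hx : a < x) : 0 < f x ↔ x < c := by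
  rw [← sign_eq_one_iff, h.sign_eq x hx, sign_eq_one_iff, sub_pos]

theorem neg_iff (h : IsDownCrossing f a c) (hx : a < x) : f x < 0 ↔ c < x := by
  rw [← sign_eq_neg_one_iff, h.sign_eq x hx, sign_eq_neg_one_iff, sub_neg]

theorem eq_zero_iff (h : IsDownCrossing f a c) (hx : a < x) : f x = 0 ↔ x = c := by
  rw [← _root_.sign_eq_zero_iff, h.sign_eq x hx, _root_.sign_eq_zero_iff, sub_eq_zero, eq_comm]

theorem const_sub (hac : a < c) : IsDownCrossing (fun x ↦ c - x) a c :=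
  ⟨hac, fun _ _ ↦ rfl⟩

theorem of_eq_pos_mul (h : IsDownCrossing f a c) (hr : ∀ x, a < x → 0 < r x)
    (hg : ∀ x, a < x → g x = r x * f x) : IsDownCrossing g a c where
  lt := h.lt
  sign_eq x hx := by rw [hg x hx, sign_mul, sign_pos (hr x hx), one_mul, h.sign_eq x hx]

theorem strictMonoOn (h : IsDownCrossing (deriv f) a c) (hs : Convex ℝ s) (hsac : s ⊆ Icc a c)
    (hf : ContinuousOn f s) : StrictMonoOn f s :=
  strictMonoOn_of_deriv_pos hs hf fun x hx ↦ by
    have hx' : x ∈ Ioo a c := interior_Icc (a := a) ▸ interior_mono hsac hx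
    exact (h.pos_iff hx'.1).2 hx'.2

theorem strictAntiOn_Ici (h : IsDownCrossing (deriv f) a c) (hf : ContinuousOn f (Ici c)) :
    StrictAntiOn f (Ici c) :=
  strictAntiOn_of_deriv_neg (convex_Ici c) hf fun x hx ↦ by
    rw [interior_Ici] at hx
    exact (h.neg_iff (h.lt.trans hx)).2 hx

theorem apply_lt_of_ne (h : IsDownCrossing (deriv f) a c) (hf : ContinuousOn f (Ioi a))
    (hx : a < x) (hxc : x ≠ c) : f x < f c := by
  rcases hxc.lt_or_gt with hlt | hgt
  · exact h.strictMonoOn (convex_Ioc a c) Ioc_subset_Icc_self (hf.mono Ioc_subset_Ioi_self)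
      ⟨hx, hlt.le⟩ ⟨h.lt, le_rfl⟩ hlt
  · exact h.strictAntiOn_Ici (hf.mono (Ici_subset_Ioi.2 h.lt)) self_mem_Ici hgt.le hgt

theorem exists_of_deriv (h : IsDownCrossing (deriv f) a c) (hf : ContinuousOn f (Ici a))
    (ha : 0 ≤ f a) (hab : a < b) (hb : f b < 0) : ∃ d, IsDownCrossing f a d := by
  have mono : StrictMonoOn f (Icc a c) :=
    h.strictMonoOn (convex_Icc a c) subset_rfl (hf.mono Icc_subset_Ici_self)
  have anti : StrictAntiOn f (Ici c) := h.strictAntiOn_Ici (hf.mono (Ici_subset_Ici.2 h.lt.le))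
  have pos_of_le : ∀ x, a < x → x ≤ c → 0 < f x := fun x hx hxc ↦
    ha.trans_lt (mono (left_mem_Icc.2 h.lt.le) ⟨hx.le, hxc⟩ hx)
  have hcb : c < b := lt_of_not_ge fun hbc ↦ hb.not_gt (pos_of_le b hab hbc)
  obtain ⟨d, ⟨hcd, -⟩, hd⟩ : ∃ d ∈ Ioo c b, f d = 0 :=
    intermediate_value_Ioo' hcb.le
      (hf.mono (Icc_subset_Ici_self.trans (Ici_subset_Ici.2 h.lt.le)))
      ⟨hb, pos_of_le c h.lt le_rfl⟩
  refine ⟨d, h.lt.trans hcd, fun x hx ↦ ?_⟩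
  rcases le_total x c with hxc | hcx
  · rw [sign_pos (pos_of_le x hx hxc), sign_pos (sub_pos.2 (hxc.trans_lt hcd))]
  rcases lt_trichotomy x d with hxd | rfl | hdx
  · rw [sign_pos (hd ▸ anti hcx hcd.le hxd), sign_pos (sub_pos.2 hxd)]
  · rw [hd, sub_self]
  · rw [sign_neg (hd ▸ anti hcd.le hcx hdx), sign_neg (sub_neg.2 hdx)]

end IsDownCrossing

/-- The numerator of `g'`, normalised so that `g'(x) = (2 / x³) * gVarDerivNum x`. -/
noncomputable def gVarDerivNum (x : ℝ) : ℝ :=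
  (x + 1) * exp (-2 * x) + (x ^ 2 + x) * exp (-x) - 1

/-- The derivative of `gVarDerivNum` multiplied by `e^{2x}`, which has the same sign and becomes a
polynomial times `exp` after two more differentiations. -/
noncomputable def gVarDerivNumScaledDeriv (x : ℝ) : ℝ :=
  (1 + x - x ^ 2) * exp x - (2 * x + 1)

theorem hasDerivAt_exp_const_mul (k x : ℝ) :
    HasDerivAt (fun y ↦ exp (k * y)) (k * exp (k * x)) x := by
  simpa [mul_comm] using ((hasDerivAt_id x).const_mul k).exp

theorem hasDerivAt_gVar {x : ℝ} (hx : x ≠ 0) :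
    HasDerivAt gVar (2 / x ^ 3 * gVarDerivNum x) x := by
  have hnum := ((hasDerivAt_exp_const_mul (-2) x).const_sub 1).sub
    (((hasDerivAt_id x).const_mul 2).mul (hasDerivAt_neg x).exp)
  refine (hnum.div (hasDerivAt_pow 2 x) (pow_ne_zero 2 hx)).congr_deriv ?_
  simp only [gVarDerivNum, Pi.sub_apply, Pi.mul_apply, id]
  field_simp
  ring

theorem hasDerivAt_gVarDerivNum (x : ℝ) :
    HasDerivAt gVarDerivNum (exp (-2 * x) * gVarDerivNumScaledDeriv x) x := by
  have exp_neg_eq : exp (-x) = exp (-2 * x) * exp x := by rw [← exp_add]; ring_nf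
  refine (((((hasDerivAt_id x).add_const 1).mul (hasDerivAt_exp_const_mul (-2) x)).add
    (((hasDerivAt_pow 2 x).add (hasDerivAt_id x)).mul (hasDerivAt_neg x).exp)).sub_const
      1).congr_deriv ?_
  simp only [gVarDerivNumScaledDeriv, Pi.add_apply, id, exp_neg_eq]
  ring

theorem hasDerivAt_gVarDerivNumScaledDeriv (x : ℝ) :
    HasDerivAt gVarDerivNumScaledDeriv ((2 - x - x ^ 2) * exp x - 2) x := by
  refine (((((hasDerivAt_id x).const_add 1).sub (hasDerivAt_pow 2 x)).mul (hasDerivAt_exp x)).sub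
    (((hasDerivAt_id x).const_mul 2).add_const 1)).congr_deriv ?_
  simp only [Pi.sub_apply, id]
  ring

theorem hasDerivAt_deriv_gVarDerivNumScaledDeriv (x : ℝ) :
    HasDerivAt (deriv gVarDerivNumScaledDeriv) ((1 - 3 * x - x ^ 2) * exp x) x := by
  rw [funext fun y ↦ (hasDerivAt_gVarDerivNumScaledDeriv y).deriv]
  refine (((((hasDerivAt_id x).const_sub 2).sub (hasDerivAt_pow 2 x)).mul
    (hasDerivAt_exp x)).sub_const 2).congr_deriv ?_
  simp only [Pi.sub_apply, id]
  ring

theorem exists_isDownCrossing_deriv_gVarDerivNumScaledDeriv :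
    ∃ c, IsDownCrossing (deriv gVarDerivNumScaledDeriv) 0 c := by
  obtain ⟨c, hc_pos, hc⟩ : ∃ c : ℝ, 0 < c ∧ 1 - 3 * c - c ^ 2 = 0 := by
    have : 3 < √13 := Real.lt_sqrt_of_sq_lt (by norm_num)
    exact ⟨(√13 - 3) / 2, by linarith, by linarith [Real.sq_sqrt (show (0 : ℝ) ≤ 13 by norm_num)]⟩
  have deriv_crossing : IsDownCrossing (deriv (deriv gVarDerivNumScaledDeriv)) 0 c := by
    refine (IsDownCrossing.const_sub hc_pos).of_eq_pos_mul (r := fun x ↦ exp x * (x + 3 + c))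
      (fun x hx ↦ by positivity) fun x _ ↦ ?_
    rw [(hasDerivAt_deriv_gVarDerivNumScaledDeriv x).deriv]
    linear_combination exp x * hc
  refine deriv_crossing.exists_of_deriv (b := 1)
    (fun x _ ↦ (hasDerivAt_deriv_gVarDerivNumScaledDeriv x).continuousAt.continuousWithinAt)
    ?_ one_pos ?_ <;>
  · rw [(hasDerivAt_gVarDerivNumScaledDeriv _).deriv]
    norm_num

theorem exists_isDownCrossing_gVarDerivNumScaledDeriv :
    ∃ c, IsDownCrossing gVarDerivNumScaledDeriv 0 c := by
  obtain ⟨c, hc⟩ := exists_isDownCrossing_deriv_gVarDerivNumScaledDeriv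
  refine hc.exists_of_deriv (b := 2)
    (fun x _ ↦ (hasDerivAt_gVarDerivNumScaledDeriv x).continuousAt.continuousWithinAt)
    (by norm_num [gVarDerivNumScaledDeriv]) two_pos ?_
  rw [gVarDerivNumScaledDeriv]
  linarith [exp_pos 2]

theorem gVarDerivNum_eleven_tenths_pos : 0 < gVarDerivNum 1.1 := by
  have lower : 0.3327 < exp (-1.1) := by
    refine lt_of_pow_lt_pow_left₀ 10 (exp_pos _).le ?_
    calc (0.3327 : ℝ) ^ 10 < 0.36787944116 ^ 11 := by norm_num
      _ < exp (-1) ^ 11 := by gcongr; exact exp_neg_one_gt_d9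
      _ = exp (-1.1) ^ 10 := by rw [← exp_nat_mul, ← exp_nat_mul]; norm_num
  have sq_eq : exp (-2 * 1.1) = exp (-1.1) ^ 2 := by rw [← exp_nat_mul]; norm_num
  rw [gVarDerivNum, sq_eq]
  nlinarith

theorem gVarDerivNum_six_fifths_neg : gVarDerivNum 1.2 < 0 := by
  have upper : exp (-1.2) < 0.302 := by
    refine lt_of_pow_lt_pow_left₀ 5 (by norm_num) ?_
    calc exp (-1.2) ^ 5 = exp (-1) ^ 6 := by rw [← exp_nat_mul, ← exp_nat_mul]; norm_num
      _ < 0.3678794412 ^ 6 := by gcongr; exact exp_neg_one_lt_d9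
      _ < 0.302 ^ 5 := by norm_num
  have sq_eq : exp (-2 * 1.2) = exp (-1.2) ^ 2 := by rw [← exp_nat_mul]; norm_num
  rw [gVarDerivNum, sq_eq]
  nlinarith [exp_pos (-1.2)]

theorem exists_isDownCrossing_gVarDerivNum : ∃ η, IsDownCrossing gVarDerivNum 0 η := by
  obtain ⟨c, hc⟩ := exists_isDownCrossing_gVarDerivNumScaledDeriv
  have deriv_crossing : IsDownCrossing (deriv gVarDerivNum) 0 c :=
    hc.of_eq_pos_mul (fun x _ ↦ exp_pos (-2 * x)) fun x _ ↦ (hasDerivAt_gVarDerivNum x).deriv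
  exact deriv_crossing.exists_of_deriv
    (fun x _ ↦ (hasDerivAt_gVarDerivNum x).continuousAt.continuousWithinAt)
    (by norm_num [gVarDerivNum]) (by norm_num) gVarDerivNum_six_fifths_neg

/-- There is a unique `η > 0` with `g′(η) = 0`; `g` is strictly increasing on `(0, η]`,
strictly decreasing on `[η, ∞)`, `η ∈ (1.1, 1.2)`, and `η` is the unique maximizer of `g`
on `(0, ∞)`. -/
theorem gVar_unique_maximizer :
    ∃ η : ℝ, 0 < η ∧ deriv gVar η = 0 ∧
      (∀ x : ℝ, 0 < x → deriv gVar x = 0 → x = η) ∧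
      StrictMonoOn gVar (Set.Ioc 0 η) ∧
      StrictAntiOn gVar (Set.Ici η) ∧
      η ∈ Set.Ioo (1.1 : ℝ) 1.2 ∧
      (∀ x : ℝ, 0 < x → x ≠ η → gVar x < gVar η) := by
  obtain ⟨η, hη⟩ := exists_isDownCrossing_gVarDerivNum
  have deriv_crossing : IsDownCrossing (deriv gVar) 0 η :=
    hη.of_eq_pos_mul (fun x hx ↦ by positivity) fun x hx ↦ (hasDerivAt_gVar hx.ne').deriv
  have cont : ContinuousOn gVar (Ioi 0) := fun x hx ↦
    (hasDerivAt_gVar (ne_of_gt hx)).continuousAt.continuousWithinAt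
  exact ⟨η, hη.lt, (deriv_crossing.eq_zero_iff hη.lt).2 rfl,
    fun x hx ↦ (deriv_crossing.eq_zero_iff hx).1,
    deriv_crossing.strictMonoOn (convex_Ioc 0 η) Ioc_subset_Icc_self
      (cont.mono Ioc_subset_Ioi_self),
    deriv_crossing.strictAntiOn_Ici (cont.mono (Ici_subset_Ioi.2 hη.lt)),
    ⟨(hη.pos_iff (by norm_num)).1 gVarDerivNum_eleven_tenths_pos,
      (hη.neg_iff (by norm_num)).1 gVarDerivNum_six_fifths_neg⟩,
    fun x hx hne ↦ deriv_crossing.apply_lt_of_ne cont hx hne⟩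
end

section
/- Let Φ denote the cumulative distribution function of the standard normal distribution. For every real c > 0 and every integer Δ ≥ 2 such that c·√(ln Δ) ≥ 1, one has Φ(c √(ln Δ))^Δ ≤ exp( − Δ^{1 − c²/2} / (2 √(2π) · c · √(ln Δ)) ). In particular, for every fixed c with 0 < c < √2, Φ(c √(ln Δ))^Δ → 0 as Δ → ∞. -/
open Real MeasureTheory Filter

/-- The cumulative distribution function of the standard normal distribution. -/
noncomputable def stdNormalCDF (x : ℝ) : ℝ :=
  ∫ t in Set.Iic x, Real.exp (-t ^ 2 / 2) / Real.sqrt (2 * Real.pi)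

/-!
Let `φ` be the standard normal density and `F t = -φ t * (t / (t ^ 2 + 1))`. Since
`φ' t = -t * φ t`, we get `F' t = φ t * (1 - 2 / (t ^ 2 + 1) ^ 2) ≤ φ t`, and integrating over
`(x, ∞)` gives `1 - Φ x ≥ φ x * (x / (x ^ 2 + 1))`; for mean `μ` and variance `v` the
multiplier becomes `v * (t - μ) / ((t - μ) ^ 2 + v)`. With `1 - u ≤ exp (-u)` it follows that
`Φ x ^ r ≤ exp (-(r * φ x * (x / (x ^ 2 + 1))))`. For `x = c * √(log Δ)` the Gaussian factor is a
power of `Δ`, namely `exp (-x ^ 2 / 2) = Δ ^ (-c ^ 2 / 2)`, and for `0 < c < √2` the exponent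
`1 - c ^ 2 / 2` is positive, so `Δ ^ (1 - c ^ 2 / 2)` outgrows `√(log Δ)`.
-/

section GaussianTail

open ProbabilityTheory Set
open scoped NNReal

variable {μ : ℝ} {v : ℝ≥0}

lemma hasDerivAt_gaussianPDFReal (x : ℝ) :
    HasDerivAt (gaussianPDFReal μ v) (-((x - μ) / v) * gaussianPDFReal μ v x) x := by
  have hexponent : HasDerivAt (fun t : ℝ ↦ -(t - μ) ^ 2 / (2 * v)) (-((x - μ) / v)) x := by
    refine ((((hasDerivAt_id x).sub_const μ).pow 2).neg.div_const (2 * (v : ℝ))).congr_deriv ?_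
    simp only [id, Nat.cast_ofNat, Nat.add_one_sub_one, pow_one, mul_one]
    rw [← mul_neg, mul_div_mul_left _ _ two_ne_zero, neg_div]
  refine (hexponent.exp.const_mul (√(2 * π * v))⁻¹).congr_deriv ?_
  rw [gaussianPDFReal]
  ring

lemma hasDerivAt_mul_sub_div_sq_add (hv : v ≠ 0) (x : ℝ) :
    HasDerivAt (fun t : ℝ ↦ v * (t - μ) / ((t - μ) ^ 2 + v))
      (v * (v - (x - μ) ^ 2) / ((x - μ) ^ 2 + v) ^ 2) x := by
  have hnum : HasDerivAt (fun t : ℝ ↦ v * (t - μ)) v x := by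
    simpa using ((hasDerivAt_id x).sub_const μ).const_mul (v : ℝ)
  have hden : HasDerivAt (fun t : ℝ ↦ (t - μ) ^ 2 + v) (2 * (x - μ)) x := by
    simpa using (((hasDerivAt_id x).sub_const μ).pow 2).add_const (v : ℝ)
  refine (hnum.div hden (by positivity)).congr_deriv ?_
  ring

lemma hasDerivAt_neg_gaussianPDFReal_mul (hv : v ≠ 0) (x : ℝ) :
    HasDerivAt (fun t ↦ -(gaussianPDFReal μ v t * (v * (t - μ) / ((t - μ) ^ 2 + v))))
      (gaussianPDFReal μ v x * (1 - 2 * v ^ 2 / ((x - μ) ^ 2 + v) ^ 2)) x := by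
  refine (((hasDerivAt_gaussianPDFReal x).mul
    (hasDerivAt_mul_sub_div_sq_add hv x)).neg).congr_deriv ?_
  have hden : (x - μ) ^ 2 + v ≠ 0 := by positivity
  field_simp
  ring

lemma integrable_gaussianPDFReal_mul_div_sq_add (hv : v ≠ 0) :
    Integrable fun t ↦ gaussianPDFReal μ v t * (v * (t - μ) / ((t - μ) ^ 2 + v)) := by
  refine (integrable_gaussianPDFReal μ v).mul_bdd (c := v + 1)
    (Measurable.aestronglyMeasurable (by fun_prop)) (ae_of_all _ fun t ↦ ?_)
  rw [norm_div, norm_of_nonneg (by positivity : 0 ≤ (t - μ) ^ 2 + (v : ℝ)),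
    div_le_iff₀ (by positivity), norm_mul, norm_of_nonneg v.coe_nonneg, Real.norm_eq_abs,
    ← sq_abs (t - μ)]
  -- AM-GM: `2 * |t - μ| ≤ |t - μ| ^ 2 + 1`
  have hsq : 0 ≤ v * (|t - μ| - 1) ^ 2 := by positivity
  have habs : 0 ≤ v * |t - μ| := by positivity
  nlinarith [sq_nonneg |t - μ|]

lemma integrable_gaussianPDFReal_mul_one_sub (hv : v ≠ 0) :
    Integrable fun t ↦ gaussianPDFReal μ v t * (1 - 2 * v ^ 2 / ((t - μ) ^ 2 + v) ^ 2) := by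
  refine (integrable_gaussianPDFReal μ v).mul_bdd (c := 1)
    (Measurable.aestronglyMeasurable (by fun_prop)) (ae_of_all _ fun t ↦ ?_)
  have hle_two : 2 * (v : ℝ) ^ 2 / ((t - μ) ^ 2 + v) ^ 2 ≤ 2 := by
    rw [div_le_iff₀ (by positivity)]
    gcongr
    exact le_add_of_nonneg_left (sq_nonneg _)
  have hnonneg : 0 ≤ 2 * (v : ℝ) ^ 2 / ((t - μ) ^ 2 + v) ^ 2 := by positivity
  exact abs_le.2 ⟨by linarith, by linarith⟩

lemma gaussianPDFReal_mul_le_integral_Ioi (hv : v ≠ 0) (x : ℝ) :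
    gaussianPDFReal μ v x * (v * (x - μ) / ((x - μ) ^ 2 + v)) ≤
      ∫ t in Ioi x, gaussianPDFReal μ v t := by
  have hint := (integrable_gaussianPDFReal_mul_one_sub (μ := μ) hv).integrableOn (s := Ioi x)
  have hlim := tendsto_zero_of_hasDerivAt_of_integrableOn_Ioi
    (fun t _ ↦ hasDerivAt_neg_gaussianPDFReal_mul hv t) hint
    (integrable_gaussianPDFReal_mul_div_sq_add hv).neg.integrableOn
  calc gaussianPDFReal μ v x * (v * (x - μ) / ((x - μ) ^ 2 + v))
      = ∫ t in Ioi x, gaussianPDFReal μ v t * (1 - 2 * v ^ 2 / ((t - μ) ^ 2 + v) ^ 2) := by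
        rw [integral_Ioi_of_hasDerivAt_of_tendsto'
          (fun t _ ↦ hasDerivAt_neg_gaussianPDFReal_mul hv t) hint hlim, sub_neg_eq_add, zero_add]
    _ ≤ ∫ t in Ioi x, gaussianPDFReal μ v t :=
        integral_mono hint (integrable_gaussianPDFReal μ v).integrableOn fun t ↦
          mul_le_of_le_one_right (gaussianPDFReal_nonneg μ v t) (sub_le_self _ (by positivity))

lemma cdf_gaussianReal_eq_integral (hv : v ≠ 0) (x : ℝ) :
    cdf (gaussianReal μ v) x = ∫ t in Iic x, gaussianPDFReal μ v t := by
  rw [cdf_eq_real, measureReal_def, gaussianReal_apply_eq_integral μ hv,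
    ENNReal.toReal_ofReal (integral_nonneg (gaussianPDFReal_nonneg μ v))]

lemma cdf_gaussianReal_le_one_sub (hv : v ≠ 0) (x : ℝ) :
    cdf (gaussianReal μ v) x ≤
      1 - gaussianPDFReal μ v x * (v * (x - μ) / ((x - μ) ^ 2 + v)) := by
  have hsplit := intervalIntegral.integral_Iic_add_Ioi (b := x)
    (integrable_gaussianPDFReal μ v).integrableOn (integrable_gaussianPDFReal μ v).integrableOn
  rw [integral_gaussianPDFReal_eq_one μ hv, ← cdf_gaussianReal_eq_integral hv] at hsplit
  linarith [gaussianPDFReal_mul_le_integral_Ioi (μ := μ) hv x]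

lemma stdNormalCDF_eq_cdf (x : ℝ) : stdNormalCDF x = cdf (gaussianReal 0 1) x := by
  rw [cdf_gaussianReal_eq_integral one_ne_zero, stdNormalCDF]
  congr! 2 with t
  simp [gaussianPDFReal, div_eq_inv_mul]

lemma stdNormalCDF_nonneg (x : ℝ) : 0 ≤ stdNormalCDF x :=
  stdNormalCDF_eq_cdf x ▸ cdf_nonneg _ x

lemma monotone_stdNormalCDF : Monotone stdNormalCDF :=
  (funext stdNormalCDF_eq_cdf : stdNormalCDF = _) ▸ monotone_cdf _

lemma stdNormalCDF_le_one_sub (x : ℝ) :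
    stdNormalCDF x ≤ 1 - exp (-x ^ 2 / 2) / √(2 * π) * (x / (x ^ 2 + 1)) := by
  have h := cdf_gaussianReal_le_one_sub (μ := 0) one_ne_zero x
  simpa [stdNormalCDF_eq_cdf, gaussianPDFReal, div_eq_inv_mul] using h

end GaussianTail

lemma stdNormalCDF_rpow_le_exp (x : ℝ) {r : ℝ} (hr : 0 ≤ r) :
    stdNormalCDF x ^ r ≤
      exp (-(r * (exp (-x ^ 2 / 2) / √(2 * π) * (x / (x ^ 2 + 1))))) := by
  rw [neg_mul_eq_mul_neg, mul_comm, exp_mul]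
  exact rpow_le_rpow (stdNormalCDF_nonneg x)
    ((stdNormalCDF_le_one_sub x).trans (one_sub_le_exp_neg _)) hr

lemma one_div_two_mul_le_div_sq_add_one {x : ℝ} (hx : 1 ≤ x) :
    1 / (2 * x) ≤ x / (x ^ 2 + 1) := by
  rw [div_le_div_iff₀ (by positivity) (by positivity)]
  nlinarith

lemma exp_neg_sq_mul_sqrt_log_div_two (c : ℝ) {y : ℝ} (hy : 1 ≤ y) :
    exp (-(c * √(log y)) ^ 2 / 2) = y ^ (-(c ^ 2 / 2)) := by
  rw [mul_pow, sq_sqrt (log_nonneg hy), rpow_def_of_pos (by positivity)]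
  ring_nf

lemma stdNormalCDF_mul_sqrt_log_rpow_le {c y : ℝ} (hy : 1 ≤ y) (hcy : 1 ≤ c * √(log y)) :
    stdNormalCDF (c * √(log y)) ^ y ≤
      exp (-(y ^ (1 - c ^ 2 / 2) / (2 * √(2 * π) * c * √(log y)))) := by
  have hy₀ : 0 < y := by positivity
  refine (stdNormalCDF_rpow_le_exp _ hy₀.le).trans (exp_le_exp.2 (neg_le_neg ?_))
  calc y ^ (1 - c ^ 2 / 2) / (2 * √(2 * π) * c * √(log y))
      = y * (y ^ (-(c ^ 2 / 2)) / √(2 * π) * (1 / (2 * (c * √(log y))))) := by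
        rw [sub_eq_add_neg, rpow_add hy₀, rpow_one]
        ring
    _ ≤ y * (exp (-(c * √(log y)) ^ 2 / 2) / √(2 * π) *
          (c * √(log y) / ((c * √(log y)) ^ 2 + 1))) := by
        rw [exp_neg_sq_mul_sqrt_log_div_two c hy]
        gcongr _ * (_ * ?_)
        exact one_div_two_mul_le_div_sq_add_one hcy

lemma tendsto_rpow_div_log_rpow_atTop {a : ℝ} (s : ℝ) (ha : 0 < a) :
    Tendsto (fun y : ℝ ↦ y ^ a / log y ^ s) atTop atTop := by
  refine ((tendsto_exp_mul_div_rpow_atTop s a ha).comp tendsto_log_atTop).congr' ?_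
  filter_upwards [eventually_gt_atTop 0] with y hy
  rw [Function.comp_apply, rpow_def_of_pos hy, mul_comm a]

lemma tendsto_exp_neg_rpow_div_mul_sqrt_log {a K : ℝ} (ha : 0 < a) (hK : 0 < K) :
    Tendsto (fun y : ℝ ↦ exp (-(y ^ a / (K * √(log y))))) atTop (nhds 0) := by
  refine tendsto_exp_neg_atTop_nhds_zero.comp
    (((tendsto_rpow_div_log_rpow_atTop (1 / 2) ha).const_mul_atTop (inv_pos.2 hK)).congr
      fun y ↦ ?_)
  rw [sqrt_eq_rpow, ← div_eq_inv_mul, div_div, mul_comm K]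

lemma tendsto_stdNormalCDF_mul_sqrt_log_rpow {c : ℝ} (hc : 0 < c) (hc₂ : c < √2) :
    Tendsto (fun y : ℝ ↦ stdNormalCDF (c * √(log y)) ^ y) atTop (nhds 0) := by
  have hexponent : 0 < 1 - c ^ 2 / 2 := by linarith [(lt_sqrt hc.le).1 hc₂]
  have harg : Tendsto (fun y : ℝ ↦ c * √(log y)) atTop atTop :=
    (tendsto_sqrt_atTop.comp tendsto_log_atTop).const_mul_atTop hc
  refine squeeze_zero' (.of_forall fun y ↦ rpow_nonneg (stdNormalCDF_nonneg _) y) ?_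
    (tendsto_exp_neg_rpow_div_mul_sqrt_log hexponent (by positivity : 0 < 2 * √(2 * π) * c))
  filter_upwards [eventually_ge_atTop 1, harg.eventually_ge_atTop 1] with y hy hcy
  exact stdNormalCDF_mul_sqrt_log_rpow_le hy hcy

theorem phi_pow_tail_bound_general :
    (∀ c Δ : ℝ, 1 ≤ Δ → 1 ≤ c * √(log Δ) →
      stdNormalCDF (c * √(log Δ)) ^ Δ ≤
        exp (-(Δ ^ (1 - c ^ 2 / 2) / (2 * √(2 * π) * c * √(log Δ))))) ∧
    (∀ c < √2, Tendsto (fun Δ : ℝ ↦ stdNormalCDF (c * √(log Δ)) ^ Δ) atTop (nhds 0)) := by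
  refine ⟨fun _ _ ↦ stdNormalCDF_mul_sqrt_log_rpow_le, fun c hc ↦ ?_⟩
  -- `Φ` is monotone, so `c` may be increased to a positive value.
  have hmax : max c 1 < √2 := max_lt hc one_lt_sqrt_two
  refine squeeze_zero' (.of_forall fun Δ ↦ rpow_nonneg (stdNormalCDF_nonneg _) Δ) ?_
    (tendsto_stdNormalCDF_mul_sqrt_log_rpow (by positivity) hmax)
  filter_upwards [eventually_ge_atTop 0] with Δ hΔ
  refine rpow_le_rpow (stdNormalCDF_nonneg _) (monotone_stdNormalCDF ?_) hΔ
  gcongr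
  exact le_max_left c 1

/-- For every `c > 0` and integer `Δ ≥ 2` with `c√(ln Δ) ≥ 1`:
`Φ(c√(ln Δ))^Δ ≤ exp(−Δ^{1−c²/2}/(2√(2π) c √(ln Δ)))`; in particular, for fixed
`0 < c < √2`, `Φ(c√(ln Δ))^Δ → 0` as `Δ → ∞`. -/
theorem phi_pow_tail_bound :
    (∀ c : ℝ, 0 < c → ∀ Δ : ℕ, 2 ≤ Δ → 1 ≤ c * Real.sqrt (Real.log Δ) →
      stdNormalCDF (c * Real.sqrt (Real.log Δ)) ^ Δ ≤
        Real.exp (-((Δ:ℝ) ^ (1 - c ^ 2 / 2) /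
          (2 * Real.sqrt (2 * Real.pi) * c * Real.sqrt (Real.log Δ))))) ∧
    (∀ c : ℝ, 0 < c → c < Real.sqrt 2 →
      Filter.Tendsto (fun Δ : ℕ => stdNormalCDF (c * Real.sqrt (Real.log Δ)) ^ Δ)
        Filter.atTop (nhds 0)) :=
  ⟨fun c _ Δ hΔ h ↦ mod_cast phi_pow_tail_bound_general.1 c Δ (by norm_cast; lia) h, fun c _ hc ↦ by
    simpa [Function.comp_def] using
      (phi_pow_tail_bound_general.2 c hc).comp tendsto_natCast_atTop_atTop⟩
end

section
/- For every integer Δ ≥ 2 and every real B > 0: ∫_0^1 [1 − (1 − e^{−B x²/2})^Δ] dx ≤ √(2/B) · (√(ln Δ) + 1/(2 √(ln Δ))). Consequently ∫_0^1 [1 − (1 − e^{−B x²/2})^Δ] dx ≤ √2 · √(ln Δ / B) · (1 + o(1)), where o(1) vanishes as Δ → ∞. -/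
open Real MeasureTheory Filter

/-!
With `b = B / 2`, the integrand is at most `1` everywhere, and at most `Δ * exp (-b * x ^ 2)` by
Bernoulli's inequality. Using the first bound on `(0, a]` and the second on `(a, ∞)`, where the
Gaussian tail is at most `exp (-b * a ^ 2) / (2 * b * a)`, bounds the integral over the whole
half-line. The two bounds cross at `a = √(log Δ / b)`, which makes `Δ * exp (-b * a ^ 2) = 1`.
-/

section GaussianTail

variable {a b : ℝ}

lemma hasDerivAt_neg_exp_neg_mul_sq_div (hb : b ≠ 0) (x : ℝ) :
    HasDerivAt (fun y ↦ -(rexp (-b * y ^ 2) / (2 * b))) (x * rexp (-b * x ^ 2)) x := by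
  refine ((((hasDerivAt_pow 2 x).const_mul (-b)).exp.div_const (2 * b)).neg).congr_deriv ?_
  field_simp
  norm_num [mul_comm]

lemma tendsto_exp_neg_mul_sq_atTop (hb : 0 < b) :
    Tendsto (fun x ↦ rexp (-b * x ^ 2)) atTop (nhds 0) :=
  tendsto_exp_atBot.comp
    ((tendsto_pow_atTop two_ne_zero).const_mul_atTop_of_neg (neg_neg_of_pos hb))

lemma integral_Ioi_mul_exp_neg_mul_sq (hb : 0 < b) (a : ℝ) :
    ∫ x in Set.Ioi a, x * rexp (-b * x ^ 2) = rexp (-b * a ^ 2) / (2 * b) := by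
  have hlim : Tendsto (fun x ↦ -(rexp (-b * x ^ 2) / (2 * b))) atTop (nhds 0) := by
    simpa using ((tendsto_exp_neg_mul_sq_atTop hb).div_const (2 * b)).neg
  rw [integral_Ioi_of_hasDerivAt_of_tendsto'
    (fun x _ ↦ hasDerivAt_neg_exp_neg_mul_sq_div hb.ne' x)
    (integrable_mul_exp_neg_mul_sq hb).integrableOn hlim, zero_sub, neg_neg]

lemma integral_Ioi_exp_neg_mul_sq_le (hb : 0 < b) (ha : 0 < a) :
    ∫ x in Set.Ioi a, rexp (-b * x ^ 2) ≤ rexp (-b * a ^ 2) / (2 * b * a) :=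
  calc ∫ x in Set.Ioi a, rexp (-b * x ^ 2)
      ≤ ∫ x in Set.Ioi a, a⁻¹ * (x * rexp (-b * x ^ 2)) := by
        refine setIntegral_mono_on (integrable_exp_neg_mul_sq hb).integrableOn
          ((integrable_mul_exp_neg_mul_sq hb).const_mul a⁻¹).integrableOn measurableSet_Ioi
          fun x hx ↦ ?_
        have hax : 1 ≤ a⁻¹ * x := (one_le_inv_mul₀ ha).2 (Set.mem_Ioi.1 hx).le
        rw [← mul_assoc]
        exact le_mul_of_one_le_left (exp_pos _).le hax
    _ = rexp (-b * a ^ 2) / (2 * b * a) := by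
        rw [integral_const_mul, integral_Ioi_mul_exp_neg_mul_sq hb]
        field_simp

end GaussianTail

section Truncation

variable {f : ℝ → ℝ} {a b p : ℝ}

lemma integral_Ioi_le_of_le_one_of_le_mul_exp_neg_mul_sq (hb : 0 < b) (hp : 0 ≤ p) (ha : 0 < a)
    (hf : IntegrableOn f (Set.Ioi 0)) (hf_one : ∀ x, 0 < x → f x ≤ 1)
    (hf_exp : ∀ x, 0 < x → f x ≤ p * rexp (-b * x ^ 2)) :
    ∫ x in Set.Ioi 0, f x ≤ a + p * (rexp (-b * a ^ 2) / (2 * b * a)) := by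
  have hf_head : IntegrableOn f (Set.Ioc 0 a) := hf.mono_set Set.Ioc_subset_Ioi_self
  have hf_tail : IntegrableOn f (Set.Ioi a) := hf.mono_set (Set.Ioi_subset_Ioi ha.le)
  have head : ∫ x in Set.Ioc 0 a, f x ≤ a := by
    simpa [ha.le] using
      setIntegral_mono_on hf_head (integrableOn_const (C := (1 : ℝ)) measure_Ioc_lt_top.ne)
        measurableSet_Ioc fun x hx ↦ hf_one x hx.1
  have tail : ∫ x in Set.Ioi a, f x ≤ p * (rexp (-b * a ^ 2) / (2 * b * a)) :=
    calc ∫ x in Set.Ioi a, f x ≤ ∫ x in Set.Ioi a, p * rexp (-b * x ^ 2) :=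
          setIntegral_mono_on hf_tail ((integrable_exp_neg_mul_sq hb).const_mul p).integrableOn
            measurableSet_Ioi fun x hx ↦ hf_exp x (ha.trans hx)
      _ ≤ p * (rexp (-b * a ^ 2) / (2 * b * a)) := by
          rw [integral_const_mul]
          gcongr
          exact integral_Ioi_exp_neg_mul_sq_le hb ha
  rw [← Set.Ioc_union_Ioi_eq_Ioi ha.le,
    setIntegral_union (Set.Ioc_disjoint_Ioi le_rfl) measurableSet_Ioi hf_head hf_tail]
  exact add_le_add head tail

lemma integral_Ioi_le_sqrt_log_div_add (hb : 0 < b) (hp : 1 < p)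
    (hf : IntegrableOn f (Set.Ioi 0)) (hf_one : ∀ x, 0 < x → f x ≤ 1)
    (hf_exp : ∀ x, 0 < x → f x ≤ p * rexp (-b * x ^ 2)) :
    ∫ x in Set.Ioi 0, f x ≤ √(log p / b) + 1 / (2 * b * √(log p / b)) := by
  have hp_pos : 0 < p := zero_lt_one.trans hp
  have hlog : 0 < log p / b := div_pos (log_pos hp) hb
  have hcross : p * rexp (-b * √(log p / b) ^ 2) = 1 := by
    rw [sq_sqrt hlog.le, neg_mul, mul_div_cancel₀ _ hb.ne', exp_neg, exp_log hp_pos,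
      mul_inv_cancel₀ hp_pos.ne']
  have hbound := integral_Ioi_le_of_le_one_of_le_mul_exp_neg_mul_sq hb hp_pos.le
    (sqrt_pos.2 hlog) hf hf_one hf_exp
  rwa [← mul_div_assoc, hcross] at hbound

end Truncation

section OneSubOneSubRpow

variable {b p t : ℝ}

lemma one_sub_one_sub_rpow_nonneg (ht₀ : 0 ≤ t) (ht₁ : t ≤ 1) (hp : 0 ≤ p) :
    0 ≤ 1 - (1 - t) ^ p :=
  sub_nonneg.2 (rpow_le_one (sub_nonneg.2 ht₁) (sub_le_self 1 ht₀) hp)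

lemma one_sub_one_sub_rpow_le_one (ht : t ≤ 1) (p : ℝ) : 1 - (1 - t) ^ p ≤ 1 :=
  sub_le_self 1 (rpow_nonneg (sub_nonneg.2 ht) p)

lemma one_sub_one_sub_rpow_le_mul (ht : t ≤ 1) (hp : 1 ≤ p) : 1 - (1 - t) ^ p ≤ p * t := by
  have bernoulli := one_add_mul_self_le_rpow_one_add (neg_le_neg ht) hp
  rw [← sub_eq_add_neg] at bernoulli
  linarith

lemma exp_neg_mul_sq_le_one (hb : 0 ≤ b) (x : ℝ) : rexp (-b * x ^ 2) ≤ 1 :=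
  exp_le_one_iff.2 (mul_nonpos_of_nonpos_of_nonneg (neg_nonpos.2 hb) (sq_nonneg x))

lemma integrable_one_sub_one_sub_exp_neg_mul_sq_rpow (hb : 0 < b) (hp : 1 ≤ p) :
    Integrable fun x ↦ 1 - (1 - rexp (-b * x ^ 2)) ^ p := by
  have hp₀ : 0 ≤ p := zero_le_one.trans hp
  have hcont : Continuous fun x ↦ 1 - (1 - rexp (-b * x ^ 2)) ^ p :=
    continuous_const.sub (Continuous.rpow_const (by fun_prop) fun _ ↦ Or.inr hp₀)
  refine ((integrable_exp_neg_mul_sq hb).const_mul p).mono' hcont.aestronglyMeasurable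
    (ae_of_all _ fun x ↦ ?_)
  have hexp := exp_neg_mul_sq_le_one hb.le x
  rw [norm_of_nonneg (one_sub_one_sub_rpow_nonneg (exp_pos _).le hexp hp₀)]
  exact one_sub_one_sub_rpow_le_mul hexp hp

lemma integral_Ioi_one_sub_one_sub_exp_neg_mul_sq_rpow_le (hb : 0 < b) (hp : 1 < p) :
    ∫ x in Set.Ioi 0, (1 - (1 - rexp (-b * x ^ 2)) ^ p)
      ≤ √(log p / b) + 1 / (2 * b * √(log p / b)) :=
  integral_Ioi_le_sqrt_log_div_add hb hp
    (integrable_one_sub_one_sub_exp_neg_mul_sq_rpow hb hp.le).integrableOn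
    (fun x _ ↦ one_sub_one_sub_rpow_le_one (exp_neg_mul_sq_le_one hb.le x) p)
    (fun x _ ↦ one_sub_one_sub_rpow_le_mul (exp_neg_mul_sq_le_one hb.le x) hp.le)

lemma intervalIntegral_one_sub_one_sub_exp_neg_mul_sq_rpow_le_integral_Ioi {c : ℝ} (hc : 0 ≤ c)
    (hb : 0 < b) (hp : 1 ≤ p) :
    ∫ x in (0 : ℝ)..c, (1 - (1 - rexp (-b * x ^ 2)) ^ p)
      ≤ ∫ x in Set.Ioi 0, (1 - (1 - rexp (-b * x ^ 2)) ^ p) := by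
  rw [intervalIntegral.integral_of_le hc]
  exact setIntegral_mono_set
    (integrable_one_sub_one_sub_exp_neg_mul_sq_rpow hb hp).integrableOn
    (ae_of_all _ fun x ↦ one_sub_one_sub_rpow_nonneg (exp_pos _).le
      (exp_neg_mul_sq_le_one hb.le x) (zero_le_one.trans hp))
    Set.Ioc_subset_Ioi_self.eventuallyLE

lemma intervalIntegral_one_sub_one_sub_exp_pow_le_integral_Ioi {B c : ℝ} {n : ℕ} (hc : 0 ≤ c)
    (hB : 0 < B) (hn : 1 ≤ n) :
    ∫ x in (0 : ℝ)..c, (1 - (1 - rexp (-B * x ^ 2 / 2)) ^ n)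
      ≤ ∫ x in Set.Ioi 0, (1 - (1 - rexp (-(B / 2) * x ^ 2)) ^ (n : ℝ)) := by
  have hexponent (x : ℝ) : -B * x ^ 2 / 2 = -(B / 2) * x ^ 2 := by ring
  simpa only [hexponent, rpow_natCast] using
    intervalIntegral_one_sub_one_sub_exp_neg_mul_sq_rpow_le_integral_Ioi hc (half_pos hB)
      (Nat.one_le_cast.2 hn)

end OneSubOneSubRpow

section Asymptotics

variable {B L : ℝ}

lemma sqrt_div_half_add_eq (hB : 0 < B) (hL : 0 < L) :
    √(L / (B / 2)) + 1 / (2 * (B / 2) * √(L / (B / 2))) = √(2 / B) * (√L + 1 / (2 * √L)) := by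
  have hsqrt : √(L / (B / 2)) = √(2 / B) * √L := by
    rw [← sqrt_mul (by positivity)]
    congr 1
    field_simp
  have hsq : B * √(2 / B) ^ 2 = 2 := by
    rw [sq_sqrt (by positivity), mul_div_cancel₀ _ hB.ne']
  rw [hsqrt]
  field_simp
  linear_combination -hsq

lemma sqrt_two_div_mul_add_eq (B : ℝ) (hL : 0 ≤ L) :
    √(2 / B) * (√L + 1 / (2 * √L)) = √2 * √(L / B) * (1 + 1 / (2 * L)) := by
  have hfactor : √L + 1 / (2 * √L) = √L * (1 + 1 / (2 * L)) := by
    linear_combination -(1 / 2) * sqrt_div_self' (x := L)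
  rw [hfactor, sqrt_div zero_le_two, sqrt_div hL]
  ring

lemma tendsto_one_div_two_mul_log_atTop :
    Tendsto (fun p : ℝ ↦ 1 / (2 * log p)) atTop (nhds 0) :=
  tendsto_const_nhds.div_atTop (tendsto_log_atTop.const_mul_atTop two_pos)

end Asymptotics

theorem integral_tail_estimate_general :
    (∀ p : ℝ, 1 < p → ∀ B : ℝ, 0 < B →
      ∫ x in Set.Ioi 0, (1 - (1 - rexp (-(B / 2) * x ^ 2)) ^ p)
        ≤ √(2 / B) * (√(log p) + 1 / (2 * √(log p)))) ∧
    ∃ e : ℝ → ℝ, Tendsto e atTop (nhds 0) ∧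
      ∀ p : ℝ, 1 < p → ∀ B : ℝ, 0 < B →
        ∫ x in Set.Ioi 0, (1 - (1 - rexp (-(B / 2) * x ^ 2)) ^ p)
          ≤ √2 * √(log p / B) * (1 + e p) := by
  have bound (p : ℝ) (hp : 1 < p) (B : ℝ) (hB : 0 < B) :
      ∫ x in Set.Ioi 0, (1 - (1 - rexp (-(B / 2) * x ^ 2)) ^ p)
        ≤ √(2 / B) * (√(log p) + 1 / (2 * √(log p))) :=
    (integral_Ioi_one_sub_one_sub_exp_neg_mul_sq_rpow_le (half_pos hB) hp).trans_eq
      (sqrt_div_half_add_eq hB (log_pos hp))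
  exact ⟨bound, fun p ↦ 1 / (2 * log p), tendsto_one_div_two_mul_log_atTop,
    fun p hp B hB ↦ (bound p hp B hB).trans_eq (sqrt_two_div_mul_add_eq B (log_pos hp).le)⟩

/-- For every integer `Δ ≥ 2` and real `B > 0`:
`∫_0^1 [1 − (1 − e^{−Bx²/2})^Δ] dx ≤ √(2/B)(√(ln Δ) + 1/(2√(ln Δ)))`; consequently
the integral is at most `√2 √(ln Δ/B) (1 + o(1))` where `o(1)` vanishes as `Δ → ∞`. -/
theorem integral_tail_estimate :
    (∀ Δ : ℕ, 2 ≤ Δ → ∀ B : ℝ, 0 < B →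
      (∫ x in (0:ℝ)..1, (1 - (1 - Real.exp (-B * x ^ 2 / 2)) ^ Δ))
        ≤ Real.sqrt (2 / B) *
          (Real.sqrt (Real.log Δ) + 1 / (2 * Real.sqrt (Real.log Δ)))) ∧
    (∃ e : ℕ → ℝ, Filter.Tendsto e Filter.atTop (nhds 0) ∧
      ∀ Δ : ℕ, 2 ≤ Δ → ∀ B : ℝ, 0 < B →
        (∫ x in (0:ℝ)..1, (1 - (1 - Real.exp (-B * x ^ 2 / 2)) ^ Δ))
          ≤ Real.sqrt 2 * Real.sqrt (Real.log Δ / B) * (1 + e Δ)) := by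
  obtain ⟨bound, e, he, asymptotic⟩ := integral_tail_estimate_general
  have extend {Δ : ℕ} (hΔ : 2 ≤ Δ) {B : ℝ} (hB : 0 < B) :=
    intervalIntegral_one_sub_one_sub_exp_pow_le_integral_Ioi zero_le_one hB (one_le_two.trans hΔ)
  exact ⟨fun Δ hΔ B hB ↦ (extend hΔ hB).trans (bound Δ (Nat.one_lt_cast.2 hΔ) B hB),
    fun Δ ↦ e Δ, he.comp tendsto_natCast_atTop_atTop,
    fun Δ hΔ B hB ↦ (extend hΔ hB).trans (asymptotic Δ (Nat.one_lt_cast.2 hΔ) B hB)⟩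
end
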